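/- In the nonlinear setting with standing conditions (N1)–(N5): for every ε > 0 there exists n_0 ∈ ℕ such that for every n > n_0 and every r ∈ (0,1], one has m_n([0,r])/r^{h_n} ≤ 1 + ε. -/

import Mathlib

open Set Filter MeasureTheory Topology

noncomputable section

/-- Composition `g_{i₁} ∘ g_{i₂} ∘ ⋯ ∘ g_{i_l}` along a finite word. -/
def wordComp (g : ℕ → ℝ → ℝ) : List ℕ → ℝ → ℝ
  | [] => id
  | k :: w => g k ∘ wordComp g w

/-- The limit set `J_n` of the IFS `S_n = {g_1, …, g_n}`. -/
def limitSet (g : ℕ → ℝ → ℝ) (n : ℕ) : Set ℝ :=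
  ⋂ l : ℕ, ⋃ w ∈ {w : List ℕ | w.length = l + 1 ∧ ∀ i ∈ w, 1 ≤ i ∧ i ≤ n},
    wordComp g w '' Set.Icc (0 : ℝ) 1

/-- The distortion `κ(g) = sup_{x,y ∈ [0,1]} |g′(y)|/|g′(x)|` of a map with derivative `f'`. -/
def distortion (f' : ℝ → ℝ) : ℝ :=
  ⨆ x ∈ Set.Icc (0 : ℝ) 1, ⨆ y ∈ Set.Icc (0 : ℝ) 1, |f' y| / |f' x|

/-- The nonlinear setting of the paper: a strictly decreasing sequence `b_k → 0` with `b_0 = 1`,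
    decreasing `C²` diffeomorphisms `g_k : [0,1] → [b_k, b_{k-1}]` (with first and second
    derivatives `g'` and `g''`), the Hausdorff dimensions `h_n` of the limit sets `J_n`, and
    the standing conditions (N1)–(N5). -/
structure NonlinearIFS where
  b : ℕ → ℝ
  g : ℕ → ℝ → ℝ
  g' : ℕ → ℝ → ℝ
  g'' : ℕ → ℝ → ℝ
  h : ℕ → ℝ
  b_zero : b 0 = 1
  b_anti : StrictAnti b
  b_lim : Filter.Tendsto b Filter.atTop (nhds 0)
  g_image : ∀ k, 1 ≤ k → g k '' Set.Icc (0 : ℝ) 1 = Set.Icc (b k) (b (k - 1))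
  g_anti : ∀ k, 1 ≤ k → StrictAntiOn (g k) (Set.Icc (0 : ℝ) 1)
  g_zero : ∀ k, 1 ≤ k → g k 0 = b (k - 1)
  g_one : ∀ k, 1 ≤ k → g k 1 = b k
  deriv1 : ∀ k, 1 ≤ k → ∀ x ∈ Set.Icc (0 : ℝ) 1, HasDerivAt (g k) (g' k x) x
  deriv2 : ∀ k, 1 ≤ k → ∀ x ∈ Set.Icc (0 : ℝ) 1, HasDerivAt (g' k) (g'' k x) x
  deriv_ne : ∀ k, 1 ≤ k → ∀ x ∈ Set.Icc (0 : ℝ) 1, g' k x ≠ 0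
  h_dim : ∀ n, 1 ≤ n → dimH (limitSet g n) = ENNReal.ofReal (h n)
  N1 : Filter.Tendsto (fun n : ℕ => (1 - h n) * Real.log n) Filter.atTop (nhds 0)
  N2 : Filter.Tendsto (fun n : ℕ => ⨆ k ∈ Set.Ici n, b k / b (k + 1)) Filter.atTop (nhds 1)
  N3 : ∃ c : ℝ, 0 < c ∧ ∀ n, 1 ≤ n → ∀ x ∈ Set.Icc (0 : ℝ) 1, |g'' n x / g' n x| < c
  N4 : Filter.Tendsto (fun n : ℕ => distortion (g' n)) Filter.atTop (nhds 1)
  N5 : ∃ α : ℝ, α < 1 ∧ ∀ n, 1 ≤ n → ∀ x ∈ Set.Icc (0 : ℝ) 1, |g' n x| < α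

/-- The normalized Hausdorff measure `m_n(A) = H_{h_n}(A ∩ J_n)/H_{h_n}(J_n)`. -/
def normMeas (S : NonlinearIFS) (n : ℕ) (A : Set ℝ) : ENNReal :=
  μH[S.h n] (A ∩ limitSet S.g n) / μH[S.h n] (limitSet S.g n)

def Cls (C : ℝ) (ψ : ℝ → ℝ) : Prop :=
  ContinuousOn ψ (Icc 0 1) ∧ (∀ x ∈ Icc (0:ℝ) 1, 0 < ψ x) ∧
    ∀ x ∈ Icc (0:ℝ) 1, ∀ y ∈ Icc (0:ℝ) 1, ψ x ≤ Real.exp (C * |x - y|) * ψ y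

lemma hcv (f f' ψ : ℝ → ℝ) (h c C : ℝ) (hc : 0 ≤ c) (hC : 0 ≤ C) (h0 : 0 < h) (h1 : h ≤ 1)
    (A : Set ℝ) (hA : MeasurableSet A) (hAI : A ⊆ Icc 0 1)
    (hf : ∀ x ∈ Icc (0:ℝ) 1, HasDerivAt f (f' x) x)
    (hu : ∀ x ∈ Icc (0:ℝ) 1, ∀ y ∈ Icc (0:ℝ) 1, |f' x| ≤ Real.exp (c * |x - y|) * |f' y|)
    (hp : ∀ x ∈ Icc (0:ℝ) 1, 0 < ψ (f x))
    (hψ : ∀ x ∈ Icc (0:ℝ) 1, ∀ y ∈ Icc (0:ℝ) 1,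
      ψ (f x) ≤ Real.exp (C * |x - y|) * ψ (f y)) :
    ∫⁻ x in f '' A, ENNReal.ofReal (ψ x) ∂μH[h] ≤
      ∫⁻ x in A, ENNReal.ofReal (ψ (f x) * |f' x| ^ h) ∂μH[h] := by
  have key : ∀ N : ℕ, ∫⁻ x in f '' A, ENNReal.ofReal (ψ x) ∂μH[h] ≤
      ENNReal.ofReal (Real.exp (2 * (C + c) * (1 / ((N:ℝ) + 1)))) *
      ∫⁻ x in A, ENNReal.ofReal (ψ (f x) * |f' x| ^ h) ∂μH[h] := by
    intro N
    set N' : ℝ := (N:ℝ) + 1 with hN'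
    have hNpos : 0 < N' := by positivity
    set e : ℝ := 1 / N' with he
    have he0 : 0 < e := by positivity
    set P : ℕ → Set ℝ := fun i => A ∩ {x | ⌊x * N'⌋₊ = i} with hP
    have hPA : A = ⋃ i, P i := by
      ext x; simp [hP]
    have hPm : ∀ i, MeasurableSet (P i) := by
      intro i
      refine hA.inter ?_
      have : Measurable (fun x : ℝ => ⌊x * N'⌋₊) := Nat.measurable_floor.comp (measurable_id.mul_const _)
      exact this (measurableSet_singleton i)
    have hPd : Pairwise (Function.onFun Disjoint P) := by
      intro i j hij
      rw [Function.onFun, Set.disjoint_left]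
      rintro x ⟨_, hx⟩ ⟨_, hy⟩
      exact hij (hx.symm.trans hy)
    have hdist : ∀ i, ∀ x ∈ P i, ∀ y ∈ P i, |x - y| ≤ e := by
      intro i x hx y hy
      have hx0 := (hAI hx.1).1
      have hy0 := (hAI hy.1).1
      have hx2 : ⌊x * N'⌋₊ = i := hx.2
      have hy2 : ⌊y * N'⌋₊ = i := hy.2
      have a1 := Nat.floor_le (mul_nonneg hx0 hNpos.le)
      have a2 := Nat.lt_floor_add_one (x * N')
      have a3 := Nat.floor_le (mul_nonneg hy0 hNpos.le)
      have a4 := Nat.lt_floor_add_one (y * N')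
      rw [hx2] at a1 a2
      rw [hy2] at a3 a4
      rw [he, le_div_iff₀ hNpos, ← abs_of_pos hNpos, ← abs_mul, abs_le]
      constructor <;> nlinarith
    have piece : ∀ i, ∫⁻ x in f '' (P i), ENNReal.ofReal (ψ x) ∂μH[h] ≤
      ENNReal.ofReal (Real.exp (2 * (C + c) * e)) *
      ∫⁻ x in P i, ENNReal.ofReal (ψ (f x) * |f' x| ^ h) ∂μH[h] := by
      intro i
      rcases (P i).eq_empty_or_nonempty with hem | ⟨x0, hx0⟩
      · simp [hem]
      have hx0I := hAI hx0.1
      have hb : ∀ (a d : ℝ), 0 ≤ a → d ≤ e → Real.exp (a * d) ≤ Real.exp (a * e) := fun a d ha hd =>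
        Real.exp_le_exp.2 (mul_le_mul_of_nonneg_left hd ha)
      set K : ℝ := Real.exp (c * e) * |f' x0| with hK
      have hK0 : 0 ≤ K := by positivity
      have lip : LipschitzOnWith K.toNNReal f (P i) := by
        have : LipschitzOnWith K.toNNReal f (Icc 0 1 ∩ Metric.closedBall x0 e) := by
          refine Convex.lipschitzOnWith_of_nnnorm_hasDerivWithin_le (f' := f')
            ((convex_Icc 0 1).inter (convex_closedBall x0 e)) ?_ ?_
          · intro x hx
            exact (hf x hx.1).hasDerivWithinAt
          · intro x hx
            rw [← NNReal.coe_le_coe, coe_nnnorm, Real.coe_toNNReal _ hK0, Real.norm_eq_abs]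
            refine (hu x hx.1 x0 hx0I).trans ?_
            have := hx.2
            rw [Metric.mem_closedBall, Real.dist_eq] at this
            exact mul_le_mul_of_nonneg_right (hb _ _ hc this) (abs_nonneg _)
        refine this.mono ?_
        intro x hx
        refine ⟨hAI hx.1, ?_⟩
        rw [Metric.mem_closedBall, Real.dist_eq]
        exact hdist i x hx x0 hx0
      have hH := lip.hausdorffMeasure_image_le h0.le
      have hKh : (K.toNNReal : ENNReal) ^ h = ENNReal.ofReal (K ^ h) := by
        rw [← ENNReal.ofReal_rpow_of_nonneg hK0 h0.le]; rfl
      rw [hKh] at hH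
      have hψ0 := hp x0 hx0I
      calc ∫⁻ x in f '' (P i), ENNReal.ofReal (ψ x) ∂μH[h]
          ≤ ∫⁻ x in f '' (P i), ENNReal.ofReal (Real.exp (C * e) * ψ (f x0)) ∂μH[h] := by
            refine setLIntegral_mono measurable_const ?_
            rintro _ ⟨x, hx, rfl⟩
            refine ENNReal.ofReal_le_ofReal ((hψ x (hAI hx.1) x0 hx0I).trans ?_)
            exact mul_le_mul_of_nonneg_right (hb _ _ hC (hdist i x hx x0 hx0)) hψ0.le
        _ = ENNReal.ofReal (Real.exp (C * e) * ψ (f x0)) * μH[h] (f '' (P i)) := by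
            rw [setLIntegral_const]
        _ ≤ ENNReal.ofReal (Real.exp (C * e) * ψ (f x0)) * (ENNReal.ofReal (K ^ h) * μH[h] (P i)) := by
            gcongr
        _ = ENNReal.ofReal (Real.exp (2 * (C + c) * e)) * ∫⁻ x in P i,
            ENNReal.ofReal (Real.exp (-(2 * (C + c) * e)) * ((Real.exp (C * e) * ψ (f x0)) * K ^ h)) ∂μH[h] := by
            rw [setLIntegral_const, ← mul_assoc, ← mul_assoc,
              ← ENNReal.ofReal_mul (by positivity), ← ENNReal.ofReal_mul (by positivity), ← mul_assoc,
              ← Real.exp_add]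
            simp
        _ ≤ _ := by
            gcongr _ * ?_
            refine setLIntegral_mono' (hPm i) ?_
            intro x hx
            apply ENNReal.ofReal_le_ofReal
            have hxI := hAI hx.1
            have e1 := (hψ x0 hx0I x hxI).trans (mul_le_mul_of_nonneg_right
              (hb _ _ hC (hdist i x0 hx0 x hx)) (hp x hxI).le)
            have e2 := (hu x0 hx0I x hxI).trans (mul_le_mul_of_nonneg_right
              (hb _ _ hc (hdist i x0 hx0 x hx)) (abs_nonneg _))
            have e3 : K ^ h ≤ Real.exp (2 * (c * e)) * |f' x| ^ h := by
              have : K ≤ Real.exp (2 * (c * e)) * |f' x| := by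
                rw [hK, two_mul, Real.exp_add, mul_assoc]
                gcongr
              refine (Real.rpow_le_rpow hK0 this h0.le).trans ?_
              rw [Real.mul_rpow (by positivity) (by positivity)]
              gcongr
              refine (Real.rpow_le_rpow_of_exponent_le ?_ h1).trans (by simp)
              exact Real.one_le_exp (by positivity)
            calc Real.exp (-(2 * (C + c) * e)) * ((Real.exp (C * e) * ψ (f x0)) * K ^ h)
                ≤ Real.exp (-(2 * (C + c) * e)) * ((Real.exp (C * e) * (Real.exp (C * e) * ψ (f x))) *
                  (Real.exp (2 * (c * e)) * |f' x| ^ h)) := by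
                  have := hp x hxI
                  gcongr
              _ = (Real.exp (-(2 * (C + c) * e)) * (Real.exp (C * e) * Real.exp (C * e) *
                  Real.exp (2 * (c * e)))) * (ψ (f x) * |f' x| ^ h) := by ring
              _ = ψ (f x) * |f' x| ^ h := by
                  rw [← Real.exp_add, ← Real.exp_add, ← Real.exp_add]
                  ring_nf
                  simp
    calc ∫⁻ x in f '' A, ENNReal.ofReal (ψ x) ∂μH[h]
        = ∫⁻ x in ⋃ i, f '' (P i), ENNReal.ofReal (ψ x) ∂μH[h] := by
          rw [← image_iUnion, ← hPA]
      _ ≤ ∑' i, ∫⁻ x in f '' (P i), ENNReal.ofReal (ψ x) ∂μH[h] := lintegral_iUnion_le _ _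
      _ ≤ ∑' i, ENNReal.ofReal (Real.exp (2 * (C + c) * e)) *
          ∫⁻ x in P i, ENNReal.ofReal (ψ (f x) * |f' x| ^ h) ∂μH[h] := ENNReal.tsum_le_tsum piece
      _ = _ := by
          rw [ENNReal.tsum_mul_left, ← lintegral_iUnion hPm hPd, ← hPA]
  have lim : Tendsto (fun N : ℕ => ENNReal.ofReal (Real.exp (2 * (C + c) * (1 / ((N:ℝ) + 1)))) *
      ∫⁻ x in A, ENNReal.ofReal (ψ (f x) * |f' x| ^ h) ∂μH[h]) atTop
      (𝓝 (1 * ∫⁻ x in A, ENNReal.ofReal (ψ (f x) * |f' x| ^ h) ∂μH[h])) := by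
    refine ENNReal.Tendsto.mul_const ?_ (Or.inl one_ne_zero)
    rw [← ENNReal.ofReal_one]
    refine ENNReal.tendsto_ofReal ?_
    have := (tendsto_one_div_add_atTop_nhds_zero_nat (𝕜 := ℝ)).const_mul (2 * (C + c))
    rw [mul_zero] at this
    have := (Real.continuous_exp.tendsto 0).comp this
    rwa [Real.exp_zero] at this
  rw [one_mul] at lim
  exact ge_of_tendsto' lim key

def Elev (g : ℕ → ℝ → ℝ) (n : ℕ) : ℕ → Set ℝ
  | 0 => Icc 0 1
  | l + 1 => ⋃ k ∈ Icc 1 n, g k '' Elev g n l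

lemma elev_eq (g : ℕ → ℝ → ℝ) (n l : ℕ) :
    (⋃ w ∈ {w : List ℕ | w.length = l ∧ ∀ i ∈ w, 1 ≤ i ∧ i ≤ n},
      wordComp g w '' Set.Icc (0 : ℝ) 1) = Elev g n l := by
  induction l with
  | zero =>
    ext x
    simp only [mem_iUnion, mem_ofPred_eq, Elev, List.length_eq_zero_iff]
    constructor
    · rintro ⟨w, ⟨rfl, _⟩, y, hy, rfl⟩
      exact hy
    · intro hx
      exact ⟨[], ⟨rfl, by simp⟩, x, hx, rfl⟩
  | succ l ih =>
    ext x
    rw [Elev, ← ih]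
    simp only [mem_iUnion, mem_ofPred_eq, mem_image]
    constructor
    · rintro ⟨w, ⟨hw, hw2⟩, y, hy, rfl⟩
      match w, hw, hw2 with
      | k :: w, hw, hw2 =>
        refine ⟨k, hw2 k (by simp), wordComp g w y, ⟨w, ⟨by simpa using hw, fun i hi => hw2 i (by simp [hi])⟩, y, hy, rfl⟩, rfl⟩
    · rintro ⟨k, hk, _, ⟨w, ⟨hw, hw2⟩, y, hy, rfl⟩, rfl⟩
      refine ⟨k :: w, ⟨by simp [hw], ?_⟩, y, hy, rfl⟩
      intro i hi
      rcases List.mem_cons.1 hi with rfl | hi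
      · exact hk
      · exact hw2 i hi

lemma limitSet_eq (g : ℕ → ℝ → ℝ) (n : ℕ) : limitSet g n = ⋂ l, Elev g n (l + 1) := by
  unfold limitSet
  exact iInter_congr fun l => elev_eq g n (l + 1)

section
variable (S : NonlinearIFS)

lemma b_pos (k : ℕ) : 0 < S.b k := by
  have h1 := S.b_anti (Nat.lt_succ_self k)
  have h2 := S.b_anti.antitone.le_of_tendsto S.b_lim (k + 1)
  exact lt_of_le_of_lt h2 h1

lemma b_le_one (k : ℕ) : S.b k ≤ 1 := by
  rw [← S.b_zero]; exact S.b_anti.antitone (Nat.zero_le k)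

lemma g_mem {k : ℕ} (hk : 1 ≤ k) {x : ℝ} (hx : x ∈ Icc (0:ℝ) 1) :
    S.g k x ∈ Icc (S.b k) (S.b (k - 1)) := by
  rw [← S.g_image k hk]; exact mem_image_of_mem _ hx

lemma g_mem_I {k : ℕ} (hk : 1 ≤ k) {x : ℝ} (hx : x ∈ Icc (0:ℝ) 1) :
    S.g k x ∈ Icc (0:ℝ) 1 :=
  ⟨(b_pos S k).le.trans (g_mem S hk hx).1, (g_mem S hk hx).2.trans (b_le_one S _)⟩

lemma g_cont {k : ℕ} (hk : 1 ≤ k) : ContinuousOn (S.g k) (Icc 0 1) := fun x hx =>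
  (S.deriv1 k hk x hx).continuousAt.continuousWithinAt

lemma g'_cont {k : ℕ} (hk : 1 ≤ k) : ContinuousOn (S.g' k) (Icc 0 1) := fun x hx =>
  (S.deriv2 k hk x hx).continuousAt.continuousWithinAt

lemma elev_sub (n l : ℕ) : Elev S.g n (l + 1) ⊆ Elev S.g n l := by
  induction l with
  | zero =>
    intro x hx
    simp only [Elev, mem_iUnion] at hx
    obtain ⟨k, hk, y, hy, rfl⟩ := hx
    exact g_mem_I S hk.1 hy
  | succ l ih =>
    intro x hx
    rw [Elev] at hx ⊢
    simp only [mem_iUnion] at hx ⊢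
    obtain ⟨k, hk, y, hy, rfl⟩ := hx
    exact ⟨k, hk, y, ih hy, rfl⟩

lemma elev_anti (n : ℕ) : Antitone (Elev S.g n) := antitone_nat_of_succ_le (elev_sub S n)

lemma elev_sub_I (n l : ℕ) : Elev S.g n l ⊆ Icc 0 1 := elev_anti S n (Nat.zero_le l)

lemma elev_compact (n l : ℕ) : IsCompact (Elev S.g n l) := by
  induction l with
  | zero => exact isCompact_Icc
  | succ l ih =>
    rw [Elev]
    refine (Set.finite_Icc 1 n).isCompact_biUnion ?_
    intro k hk
    exact ih.image_of_continuousOn ((g_cont S hk.1).mono (elev_sub_I S n l))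

lemma lim_sub_I (n : ℕ) : limitSet S.g n ⊆ Icc 0 1 := by
  rw [limitSet_eq]
  exact (iInter_subset _ 0).trans (elev_sub_I S n _)

lemma lim_meas (n : ℕ) : MeasurableSet (limitSet S.g n) := by
  rw [limitSet_eq]
  exact MeasurableSet.iInter fun l => (elev_compact S n _).measurableSet

lemma lim_sub (n : ℕ) : limitSet S.g n ⊆ ⋃ k ∈ Icc 1 n, S.g k '' limitSet S.g n := by
  intro x hx
  have hx' := hx
  rw [limitSet_eq] at hx
  have h1 : ∀ l : ℕ, ∃ k, k ∈ Icc 1 n ∧ ∃ y ∈ Elev S.g n l, S.g k y = x := by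
    intro l
    have := mem_iInter.1 hx l
    rw [Elev] at this
    simpa only [mem_iUnion, exists_prop, mem_image] using this
  choose κ hκ y hy hyx using h1
  have h2 : ∃ k ∈ Icc 1 n, ∀ L : ℕ, ∃ l ≥ L, κ l = k := by
    by_contra hcon
    push Not at hcon
    have : ∀ k, ∃ L : ℕ, k ∈ Icc 1 n → ∀ l ≥ L, κ l ≠ k := by
      intro k
      by_cases hk : k ∈ Icc 1 n
      · obtain ⟨L, hL⟩ := hcon k hk
        exact ⟨L, fun _ => hL⟩
      · exact ⟨0, fun h => absurd h hk⟩
    choose L hL using this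
    let M := ∑ k ∈ Finset.Icc 1 n, L k
    have hM : L (κ M) ≤ M := Finset.single_le_sum (f := L) (fun _ _ => Nat.zero_le _)
      (Finset.mem_Icc.2 (hκ M))
    exact hL (κ M) (hκ M) M hM rfl
  obtain ⟨k, hk, hkL⟩ := h2
  simp only [mem_iUnion]
  obtain ⟨l0, -, hl0⟩ := hkL 0
  refine ⟨k, hk, y l0, ?_, hl0 ▸ hyx l0⟩
  rw [limitSet_eq]
  refine mem_iInter.2 fun l => ?_
  obtain ⟨l', hl', hk'⟩ := hkL (l + 1)
  have : y l' = y l0 := by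
    apply (S.g_anti k hk.1).injOn (elev_sub_I S n _ (hy l')) (elev_sub_I S n _ (hy l0))
    have e1 := hyx l'
    have e2 := hyx l0
    rw [hk'] at e1
    rw [hl0] at e2
    rw [e1, e2]
  rw [← this]
  exact elev_anti S n hl' (hy l')

lemma g'_loglip {c : ℝ} (hN3 : ∀ n, 1 ≤ n → ∀ x ∈ Set.Icc (0 : ℝ) 1, |S.g'' n x / S.g' n x| < c)
    {k : ℕ} (hk : 1 ≤ k) : ∀ x ∈ Icc (0:ℝ) 1, ∀ y ∈ Icc (0:ℝ) 1,
      |S.g' k x| ≤ Real.exp (c * |x - y|) * |S.g' k y| := by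
  intro x hx y hy
  have := Convex.norm_image_sub_le_of_norm_hasDerivWithin_le (f := fun x => Real.log (S.g' k x))
    (f' := fun x => S.g'' k x / S.g' k x) (s := Icc (0:ℝ) 1) (C := c)
    (fun z hz => ((S.deriv2 k hk z hz).log (S.deriv_ne k hk z hz)).hasDerivWithinAt)
    (fun z hz => (hN3 k hk z hz).le) (convex_Icc 0 1) hy hx
  rw [Real.norm_eq_abs, Real.norm_eq_abs] at this
  have h2 := (le_abs_self _).trans this
  have px := abs_pos.2 (S.deriv_ne k hk x hx)
  have py := abs_pos.2 (S.deriv_ne k hk y hy)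
  rw [← Real.exp_log px, ← Real.exp_log py, ← Real.exp_add, Real.log_abs, Real.log_abs]
  exact Real.exp_le_exp.2 (by linarith)

lemma g_lip {α : ℝ} (hN5 : ∀ n, 1 ≤ n → ∀ x ∈ Set.Icc (0 : ℝ) 1, |S.g' n x| < α)
    {k : ℕ} (hk : 1 ≤ k) : ∀ x ∈ Icc (0:ℝ) 1, ∀ y ∈ Icc (0:ℝ) 1,
      |S.g k x - S.g k y| ≤ α * |x - y| := by
  intro x hx y hy
  exact Convex.norm_image_sub_le_of_norm_hasDerivWithin_le (f := S.g k)
    (f' := S.g' k) (s := Icc (0:ℝ) 1) (C := α)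
    (fun z hz => (S.deriv1 k hk z hz).hasDerivWithinAt)
    (fun z hz => (hN5 k hk z hz).le) (convex_Icc 0 1) hy hx

lemma cls_term {α c C h : ℝ} (hc : 0 ≤ c) (hC : 0 ≤ C) (h0 : 0 < h) (h1 : h ≤ 1)
    (hN3 : ∀ n, 1 ≤ n → ∀ x ∈ Set.Icc (0 : ℝ) 1, |S.g'' n x / S.g' n x| < c)
    (hN5 : ∀ n, 1 ≤ n → ∀ x ∈ Set.Icc (0 : ℝ) 1, |S.g' n x| < α)
    {ψ : ℝ → ℝ} (hψ : Cls C ψ) {k : ℕ} (hk : 1 ≤ k) :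
    Cls (c + α * C) (fun x => ψ (S.g k x) * |S.g' k x| ^ h) := by
  refine ⟨?_, ?_, ?_⟩
  · refine ContinuousOn.mul (hψ.1.comp (g_cont S hk) (fun x hx => g_mem_I S hk hx)) ?_
    exact (g'_cont S hk).abs.rpow_const (fun x hx => Or.inr h0.le)
  · intro x hx
    have := hψ.2.1 _ (g_mem_I S hk hx)
    have := abs_pos.2 (S.deriv_ne k hk x hx)
    positivity
  · intro x hx y hy
    have py := hψ.2.1 _ (g_mem_I S hk hy)
    have e1 : ψ (S.g k x) ≤ Real.exp (α * C * |x - y|) * ψ (S.g k y) := by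
      refine (hψ.2.2 _ (g_mem_I S hk hx) _ (g_mem_I S hk hy)).trans ?_
      gcongr ?_ * _
      apply Real.exp_le_exp.2
      have := mul_le_mul_of_nonneg_left (g_lip S hN5 hk x hx y hy) hC
      linarith
    have e2 : |S.g' k x| ^ h ≤ Real.exp (c * |x - y|) * |S.g' k y| ^ h := by
      refine (Real.rpow_le_rpow (abs_nonneg _) (g'_loglip S hN3 hk x hx y hy) h0.le).trans ?_
      rw [Real.mul_rpow (by positivity) (by positivity)]
      gcongr
      refine (Real.rpow_le_rpow_of_exponent_le ?_ h1).trans (by simp)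
      exact Real.one_le_exp (by positivity)
    calc ψ (S.g k x) * |S.g' k x| ^ h ≤ (Real.exp (α * C * |x - y|) * ψ (S.g k y)) *
          (Real.exp (c * |x - y|) * |S.g' k y| ^ h) := by gcongr
      _ = _ := by
        rw [add_mul, Real.exp_add]; ring

lemma cls_mono {C C' : ℝ} (h : C ≤ C') {ψ : ℝ → ℝ} (hψ : Cls C ψ) : Cls C' ψ := by
  refine ⟨hψ.1, hψ.2.1, fun x hx y hy => (hψ.2.2 x hx y hy).trans ?_⟩
  have := hψ.2.1 y hy
  gcongr

lemma cls_sum {C : ℝ} {n : ℕ} (hn : 1 ≤ n) {F : ℕ → ℝ → ℝ} (hF : ∀ k ∈ Finset.Icc 1 n, Cls C (F k)) :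
    Cls C (fun x => ∑ k ∈ Finset.Icc 1 n, F k x) := by
  refine ⟨continuousOn_finsetSum _ fun k hk => (hF k hk).1, ?_, ?_⟩
  · intro x hx
    exact Finset.sum_pos (fun k hk => (hF k hk).2.1 x hx) ⟨1, by simp [hn]⟩
  · intro x hx y hy
    rw [Finset.mul_sum]
    exact Finset.sum_le_sum fun k hk => (hF k hk).2.2 x hx y hy

lemma cls_sub {C s a : ℝ} (hC : 0 ≤ C) (hs : 0 < s) (hs1 : s < 1) {ψ : ℝ → ℝ}
    (hψ : Cls ((1 - s) * C) ψ) (haψ : ∀ x ∈ Icc (0:ℝ) 1, a ≤ s * ψ x) :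
    Cls C (fun x => ψ x - a) := by
  refine ⟨hψ.1.sub continuousOn_const, ?_, ?_⟩
  · intro x hx
    have := hψ.2.1 x hx
    have := haψ x hx
    nlinarith
  · intro x hx y hy
    have e1 := hψ.2.2 x hx y hy
    have py := hψ.2.1 y hy
    have e2 := haψ y hy
    have e3 : Real.exp ((1 - s) * C * |x - y|) ≤ (1 - s) * Real.exp (C * |x - y|) + s := by
      have := convexOn_exp.2 (mem_univ (C * |x - y|)) (mem_univ 0)
        (show 0 ≤ 1 - s by linarith) hs.le (by ring)
      simp only [smul_eq_mul, mul_zero, add_zero, Real.exp_zero, mul_one] at this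
      rwa [← mul_assoc] at this
    have e4 : 1 ≤ Real.exp (C * |x - y|) := Real.one_le_exp (by positivity)
    have e5 := mul_le_mul_of_nonneg_right e3 py.le
    have e6 := mul_le_mul_of_nonneg_right e2 (sub_nonneg.2 e4)
    show ψ x - a ≤ Real.exp (C * |x - y|) * (ψ y - a)
    nlinarith

lemma cls_bound {C : ℝ} (hC : 0 ≤ C) {ψ : ℝ → ℝ} (hψ : Cls C ψ) {x y : ℝ}
    (hx : x ∈ Icc (0:ℝ) 1) (hy : y ∈ Icc (0:ℝ) 1) : ψ x ≤ Real.exp C * ψ y := by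
  refine (hψ.2.2 x hx y hy).trans ?_
  have := hψ.2.1 y hy
  gcongr
  have : |x - y| ≤ 1 := by rw [abs_le]; constructor <;> linarith [hx.1, hx.2, hy.1, hy.2]
  nlinarith

lemma cls_int {C : ℝ} {ψ : ℝ → ℝ} (hψ : Cls C ψ) : IntegrableOn ψ (Icc 0 1) :=
  hψ.1.integrableOn_compact isCompact_Icc

lemma cls_le_int {C : ℝ} (hC : 0 ≤ C) {ψ : ℝ → ℝ} (hψ : Cls C ψ) {x : ℝ}
    (hx : x ∈ Icc (0:ℝ) 1) : ψ x ≤ Real.exp C * ∫ y in Icc (0:ℝ) 1, ψ y := by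
  have := setIntegral_mono_on (μ := volume) (s := Icc (0:ℝ) 1) (f := fun _ => ψ x) (g := fun y => Real.exp C * ψ y)
    (by simp) ((cls_int hψ).const_mul _) measurableSet_Icc
    (fun y hy => cls_bound hC hψ hx hy)
  simpa [integral_const_mul] using this

lemma int_le_cls {C : ℝ} (hC : 0 ≤ C) {ψ : ℝ → ℝ} (hψ : Cls C ψ) {x : ℝ}
    (hx : x ∈ Icc (0:ℝ) 1) : ∫ y in Icc (0:ℝ) 1, ψ y ≤ Real.exp C * ψ x := by
  have := setIntegral_mono_on (μ := volume) (s := Icc (0:ℝ) 1) (g := fun _ => Real.exp C * ψ x) (f := ψ)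
    (cls_int hψ) (continuousOn_const.integrableOn_compact isCompact_Icc) measurableSet_Icc
    (fun y hy => cls_bound hC hψ hy hx)
  simpa using this

lemma cls_int_pos {C : ℝ} (hC : 0 ≤ C) {ψ : ℝ → ℝ} (hψ : Cls C ψ) :
    0 < ∫ y in Icc (0:ℝ) 1, ψ y := by
  have h0 : (0:ℝ) ∈ Icc (0:ℝ) 1 := by simp
  have h1 := cls_le_int hC hψ h0
  have h2 := hψ.2.1 0 h0
  have := Real.exp_pos C
  by_contra hcon
  push Not at hcon
  nlinarith

lemma cv_leb {ψ : ℝ → ℝ} {k : ℕ} (hk : 1 ≤ k) :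
    ∫ x in Icc (0:ℝ) 1, ψ (S.g k x) * |S.g' k x| = ∫ x in (S.b k)..(S.b (k-1)), ψ x := by
  rw [intervalIntegral.integral_of_le (S.b_anti.antitone (Nat.sub_le k 1)), ← integral_Icc_eq_integral_Ioc,
    ← S.g_image k hk]
  rw [integral_image_eq_integral_abs_deriv_smul measurableSet_Icc
    (fun x hx => (S.deriv1 k hk x hx).hasDerivWithinAt) (S.g_anti k hk).injOn]
  simp [mul_comm]

lemma sum_leb {ψ : ℝ → ℝ} (hψ : ContinuousOn ψ (Icc 0 1)) (j n : ℕ) (hjn : j ≤ n) :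
    ∑ k ∈ Finset.Ioc j n, ∫ x in Icc (0:ℝ) 1, ψ (S.g k x) * |S.g' k x| =
      ∫ x in (S.b n)..(S.b j), ψ x := by
  have hint : ∀ i l, IntervalIntegrable ψ volume (S.b i) (S.b l) := by
    intro i l
    refine (hψ.mono ?_).intervalIntegrable
    exact (convex_Icc (0:ℝ) 1).ordConnected.uIcc_subset ⟨(b_pos S i).le, b_le_one S i⟩ ⟨(b_pos S l).le, b_le_one S l⟩
  induction n, hjn using Nat.le_induction with
  | base => simp
  | succ n hn ih =>
    rw [← Finset.insert_Ioc_right_eq_Ioc_add_one hn, Finset.sum_insert (by simp), ih, cv_leb S (by omega), Nat.add_sub_cancel]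
    exact intervalIntegral.integral_add_adjacent_intervals (hint _ _) (hint _ _)

lemma young {y t h : ℝ} (hy : 0 ≤ y) (ht : 0 < t) (h0 : 0 < h) (h1 : h ≤ 1) :
    y ^ h ≤ t ^ (h - 1) * (h * y + (1 - h) * t) := by
  have := Real.geom_mean_le_arith_mean2_weighted h0.le (sub_nonneg.2 h1) hy ht.le (by ring)
  have e : t ^ (h - 1) * (y ^ h * t ^ (1 - h)) = y ^ h := by
    rw [mul_comm (y ^ h), ← mul_assoc, ← Real.rpow_add ht]; simp
  rw [← e]
  gcongr
end

def Lop (S : NonlinearIFS) (n : ℕ) (h : ℝ) (ψ : ℝ → ℝ) (x : ℝ) : ℝ :=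
  ∑ k ∈ Finset.Icc 1 n, ψ (S.g k x) * |S.g' k x| ^ h

lemma Icc_Ioc (n : ℕ) : Finset.Icc 1 n = Finset.Ioc 0 n := by
  ext k; simp only [Finset.mem_Icc, Finset.mem_Ioc]; omega

lemma Lop_upper (S : NonlinearIFS) {α c C h : ℝ} (hc : 0 ≤ c) (hC : 0 ≤ C) (h0 : 0 < h) (h1 : h ≤ 1)
    (hN3 : ∀ n, 1 ≤ n → ∀ x ∈ Set.Icc (0 : ℝ) 1, |S.g'' n x / S.g' n x| < c)
    (hN5 : ∀ n, 1 ≤ n → ∀ x ∈ Set.Icc (0 : ℝ) 1, |S.g' n x| < α)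
    {n : ℕ} (hn : 1 ≤ n) {ψ : ℝ → ℝ} (hψ : Cls C ψ) :
    ∫ x in Icc (0:ℝ) 1, Lop S n h ψ x ≤
      (n:ℝ) ^ (1 - h) * (1 + (1 - h) * Real.exp C) * ∫ x in Icc (0:ℝ) 1, ψ x := by
  set I := ∫ x in Icc (0:ℝ) 1, ψ x with hI
  have hIpos : 0 < I := cls_int_pos hC hψ
  have hn0 : (0:ℝ) < n := by exact_mod_cast hn
  have hint : ∀ k ∈ Finset.Icc 1 n, IntegrableOn (fun x => ψ (S.g k x) * |S.g' k x| ^ h) (Icc (0:ℝ) 1) := by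
    intro k hk
    exact cls_int (cls_term S hc hC h0 h1 hN3 hN5 hψ (Finset.mem_Icc.1 hk).1)
  have hint1 : ∀ k ∈ Finset.Icc 1 n, IntegrableOn (fun x => ψ (S.g k x) * |S.g' k x|) (Icc (0:ℝ) 1) := by
    intro k hk
    have := cls_int (cls_term S hc hC one_pos le_rfl hN3 hN5 hψ (Finset.mem_Icc.1 hk).1)
    simpa using this
  unfold Lop
  rw [integral_finsetSum _ hint]
  have step : ∀ k ∈ Finset.Icc 1 n, ∫ x in Icc (0:ℝ) 1, ψ (S.g k x) * |S.g' k x| ^ h ≤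
      (n:ℝ) ^ (1 - h) * ((∫ x in Icc (0:ℝ) 1, ψ (S.g k x) * |S.g' k x|) + (1 - h) / n * (Real.exp C * I)) := by
    intro k hk
    have hk1 := (Finset.mem_Icc.1 hk).1
    have : ∫ x in Icc (0:ℝ) 1, ψ (S.g k x) * |S.g' k x| ^ h ≤
        ∫ x in Icc (0:ℝ) 1, (n:ℝ) ^ (1 - h) * (ψ (S.g k x) * |S.g' k x| + (1 - h) / n * (Real.exp C * I)) := by
      refine setIntegral_mono_on (hint k hk) ?_ measurableSet_Icc ?_
      · exact ((hint1 k hk).add (continuousOn_const.integrableOn_compact isCompact_Icc)).const_mul _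
      · intro x hx
        have hm := g_mem_I S hk1 hx
        have hp := hψ.2.1 _ hm
        have e1 := young (abs_nonneg (S.g' k x)) (inv_pos.2 hn0) h0 h1
        have e2 : ((n:ℝ)⁻¹) ^ (h - 1) = (n:ℝ) ^ (1 - h) := by
          rw [Real.inv_rpow hn0.le, ← Real.rpow_neg hn0.le]; congr 1; ring
        rw [e2] at e1
        have e3 := cls_le_int hC hψ hm
        rw [← hI] at e3
        have hnp : 0 < (n:ℝ) ^ (1 - h) := by positivity
        have h1' : 0 ≤ (1 - h) / n := div_nonneg (by linarith) hn0.le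
        calc ψ (S.g k x) * |S.g' k x| ^ h ≤
            ψ (S.g k x) * ((n:ℝ) ^ (1 - h) * (h * |S.g' k x| + (1 - h) * (n:ℝ)⁻¹)) := by gcongr
          _ = (n:ℝ) ^ (1 - h) * (h * (ψ (S.g k x) * |S.g' k x|) + (1 - h) / n * ψ (S.g k x)) := by ring
          _ ≤ _ := by
            have : 0 ≤ ψ (S.g k x) * |S.g' k x| := by positivity
            refine mul_le_mul_of_nonneg_left (add_le_add ?_ (mul_le_mul_of_nonneg_left e3 h1')) hnp.le
            nlinarith
    refine this.trans (le_of_eq ?_)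
    rw [integral_const_mul, integral_add (hint1 k hk) (continuousOn_const.integrableOn_compact isCompact_Icc)]
    simp
  refine (Finset.sum_le_sum step).trans ?_
  rw [← Finset.mul_sum, Finset.sum_add_distrib, mul_assoc]
  gcongr
  rw [Finset.sum_const, Nat.card_Icc, Icc_Ioc, sum_leb S hψ.1 0 n (Nat.zero_le _), S.b_zero]
  have : ∫ x in (S.b n)..1, ψ x ≤ I := by
    rw [intervalIntegral.integral_of_le (b_le_one S n)]
    refine setIntegral_mono_set (cls_int hψ) ?_ ?_
    · exact (ae_restrict_iff' measurableSet_Icc).2 (Eventually.of_forall fun x hx => (hψ.2.1 x hx).le)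
    · refine LE.le.eventuallyLE ?_
      intro x hx
      exact ⟨(b_pos S n).le.trans hx.1.le, hx.2⟩
  have e : (n + 1 - 1) • ((1 - h) / (n:ℝ) * (Real.exp C * I)) = (1 - h) * Real.exp C * I := by
    rw [nsmul_eq_mul, Nat.add_sub_cancel]; field_simp
  rw [e]
  linarith

lemma sum_pow (S : NonlinearIFS) {h : ℝ} (h0 : 0 < h) (h1 : h ≤ 1) {j n : ℕ} (hjn : j ≤ n) (hn : 1 ≤ n) :
    ∑ k ∈ Finset.Ioc j n, ∫ x in Icc (0:ℝ) 1, |S.g' k x| ^ h ≤ (n:ℝ) ^ (1 - h) * (S.b j) ^ h := by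
  have hn0 : (0:ℝ) < n := by exact_mod_cast hn
  have hb := b_pos S j
  have hint : ∀ k ∈ Finset.Ioc j n, ContinuousOn (fun x => |S.g' k x|) (Icc (0:ℝ) 1) := by
    intro k hk
    exact (g'_cont S (by have := Finset.mem_Ioc.1 hk; omega)).abs
  set t := S.b j / n with ht
  have ht0 : 0 < t := by positivity
  have step : ∀ k ∈ Finset.Ioc j n, ∫ x in Icc (0:ℝ) 1, |S.g' k x| ^ h ≤
      t ^ (h - 1) * (h * (∫ x in Icc (0:ℝ) 1, |S.g' k x|) + (1 - h) * t) := by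
    intro k hk
    have i1 : IntegrableOn (fun x => |S.g' k x|) (Icc (0:ℝ) 1) := (hint k hk).integrableOn_compact isCompact_Icc
    have : ∫ x in Icc (0:ℝ) 1, |S.g' k x| ^ h ≤
        ∫ x in Icc (0:ℝ) 1, t ^ (h - 1) * (h * |S.g' k x| + (1 - h) * t) := by
      refine setIntegral_mono_on ?_ ?_ measurableSet_Icc ?_
      · exact ((hint k hk).rpow_const (fun x hx => Or.inr h0.le)).integrableOn_compact isCompact_Icc
      · exact ((i1.const_mul h).add (continuousOn_const.integrableOn_compact isCompact_Icc)).const_mul _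
      · intro x hx
        exact young (abs_nonneg _) ht0 h0 h1
    refine this.trans (le_of_eq ?_)
    rw [integral_const_mul, integral_add (i1.const_mul h) (continuousOn_const.integrableOn_compact isCompact_Icc),
      integral_const_mul]
    simp
  refine (Finset.sum_le_sum step).trans ?_
  rw [← Finset.mul_sum, Finset.sum_add_distrib, ← Finset.mul_sum]
  have hs := sum_leb S (ψ := fun _ => 1) continuousOn_const j n hjn
  simp only [one_mul, intervalIntegral.integral_const, smul_eq_mul, mul_one] at hs
  rw [hs, Finset.sum_const, Nat.card_Ioc, nsmul_eq_mul]
  have e1 : ((n - j : ℕ) : ℝ) * ((1 - h) * t) ≤ (1 - h) * S.b j := by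
    have : ((n - j : ℕ) : ℝ) ≤ n := by exact_mod_cast Nat.sub_le n j
    have h2 : (n:ℝ) * ((1 - h) * t) = (1 - h) * S.b j := by rw [ht]; field_simp
    rw [← h2]
    have : 0 ≤ (1 - h) * t := mul_nonneg (by linarith) ht0.le
    gcongr
  have e2 : h * (S.b j - S.b n) ≤ h * S.b j := by
    have := b_pos S n
    gcongr
    linarith
  calc t ^ (h - 1) * (h * (S.b j - S.b n) + ((n - j : ℕ) : ℝ) * ((1 - h) * t))
      ≤ t ^ (h - 1) * S.b j := by gcongr; linarith
    _ = _ := by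
      rw [ht, Real.div_rpow hb.le hn0.le, Real.rpow_sub_one hb.ne', div_eq_mul_inv _ ((n:ℝ) ^ (h-1)),
        ← Real.rpow_neg hn0.le]
      rw [neg_sub]
      field_simp

lemma core (S : NonlinearIFS) {α c C h q s η : ℝ} (hc : 0 ≤ c) (hC : 0 ≤ C) (h0 : 0 < h) (h1 : h ≤ 1)
    (hα : α < 1)
    (hN3 : ∀ n, 1 ≤ n → ∀ x ∈ Set.Icc (0 : ℝ) 1, |S.g'' n x / S.g' n x| < c)
    (hN5 : ∀ n, 1 ≤ n → ∀ x ∈ Set.Icc (0 : ℝ) 1, |S.g' n x| < α)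
    (hq : 0 < q) (hq' : ∀ x ∈ Icc (0:ℝ) 1, q ≤ |S.g' 1 x|)
    (hs : 0 < s) (hs1 : s < 1) (hCs : c + α * C ≤ (1 - s) * C)
    {n : ℕ} (hn : 1 ≤ n) (μ : Measure ℝ) [IsFiniteMeasure μ] (hμ : μ.real (Icc 0 1) ≤ 1)
    (hconf : ∀ ψ, Cls C ψ → ∫ x in Icc (0:ℝ) 1, ψ x ∂μ ≤ ∫ x in Icc (0:ℝ) 1, Lop S n h ψ x ∂μ)
    (hη0 : 0 ≤ η) (hηθ : η < s * Real.exp (-C) * q)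
    (hη : (n:ℝ) ^ (1 - h) * (1 + (1 - h) * Real.exp C) ≤ 1 + η) :
    ∀ ψ, Cls C ψ → ∫ x in Icc (0:ℝ) 1, ψ x ∂μ ≤
      (s * Real.exp (-C) * q) / (s * Real.exp (-C) * q - η) * ∫ x in Icc (0:ℝ) 1, ψ x := by
  set θ := s * Real.exp (-C) * q with hθ
  have hθ0 : 0 < θ := by positivity
  have hθ1 : θ < 1 := by
    have e1 : q < 1 := (hq' 0 (by simp)).trans_lt ((hN5 1 le_rfl 0 (by simp)).trans hα)
    have e2 : Real.exp (-C) ≤ 1 := Real.exp_le_one_iff.2 (by linarith)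
    have e3 : s * Real.exp (-C) ≤ 1 := by nlinarith [Real.exp_pos (-C)]
    have e4 : 0 < s * Real.exp (-C) := by positivity
    nlinarith
  let A : Set ℝ := {M | 0 ≤ M ∧ ∀ ψ, Cls C ψ → ∫ x in Icc (0:ℝ) 1, ψ x ∂μ ≤ M * ∫ x in Icc (0:ℝ) 1, ψ x}
  have hAne : A.Nonempty := by
    refine ⟨Real.exp C, (Real.exp_pos C).le, ?_⟩
    intro ψ hψ
    have h2 := cls_int_pos hC hψ
    have := setIntegral_mono_on (μ := μ) (s := Icc (0:ℝ) 1) (f := ψ)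
      (g := fun _ => Real.exp C * ∫ x in Icc (0:ℝ) 1, ψ x)
      (hψ.1.integrableOn_compact isCompact_Icc)
      (continuousOn_const.integrableOn_compact isCompact_Icc) measurableSet_Icc
      (fun x hx => cls_le_int hC hψ hx)
    refine this.trans ?_
    rw [setIntegral_const, smul_eq_mul]
    have : 0 ≤ Real.exp C * ∫ x in Icc (0:ℝ) 1, ψ x := by positivity
    nlinarith
  have hAb : BddBelow A := ⟨0, fun M hM => hM.1⟩
  have hstep : ∀ M ∈ A, θ + M * (1 + η - θ) ∈ A := by
    rintro M ⟨hM0, hM⟩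
    refine ⟨by have : 0 ≤ M * (1 + η - θ) := mul_nonneg hM0 (by linarith)
               linarith, ?_⟩
    intro ψ hψ
    set I := ∫ x in Icc (0:ℝ) 1, ψ x with hI
    have hIpos : 0 < I := cls_int_pos hC hψ
    have hL : Cls ((1 - s) * C) (Lop S n h ψ) := by
      refine cls_mono hCs ?_
      exact cls_sum hn (F := fun k x => ψ (S.g k x) * |S.g' k x| ^ h)
        fun k hk => cls_term S hc hC h0 h1 hN3 hN5 hψ (Finset.mem_Icc.1 hk).1
    have hlow : ∀ x ∈ Icc (0:ℝ) 1, θ * I ≤ s * Lop S n h ψ x := by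
      intro x hx
      have e1 : ψ (S.g 1 x) * |S.g' 1 x| ^ h ≤ Lop S n h ψ x := by
        refine Finset.single_le_sum (f := fun k => ψ (S.g k x) * |S.g' k x| ^ h) ?_ (Finset.mem_Icc.2 ⟨le_rfl, hn⟩)
        intro k hk
        have := hψ.2.1 _ (g_mem_I S (Finset.mem_Icc.1 hk).1 hx)
        positivity
      have e2 : q ≤ |S.g' 1 x| ^ h := by
        refine (hq' x hx).trans ?_
        have := Real.rpow_le_rpow_of_exponent_ge (abs_pos.2 (S.deriv_ne 1 le_rfl x hx))
          ((hN5 1 le_rfl x hx).trans hα).le h1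
        simpa using this
      have e3 : Real.exp (-C) * I ≤ ψ (S.g 1 x) := by
        have := int_le_cls hC hψ (g_mem_I S le_rfl hx)
        rw [Real.exp_neg, inv_mul_le_iff₀ (Real.exp_pos C)]
        exact this
      have e4 : Real.exp (-C) * I * q ≤ ψ (S.g 1 x) * |S.g' 1 x| ^ h := by
        have := hψ.2.1 _ (g_mem_I S le_rfl hx)
        gcongr
      rw [hθ]
      nlinarith
    have hsub := cls_sub hC hs hs1 hL hlow
    have i1 : ∀ ν : Measure ℝ, [IsFiniteMeasureOnCompacts ν] → IntegrableOn (Lop S n h ψ) (Icc (0:ℝ) 1) ν :=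
      fun ν _ => hL.1.integrableOn_compact isCompact_Icc
    have i2 : ∀ ν : Measure ℝ, [IsFiniteMeasureOnCompacts ν] → IntegrableOn (fun _ => θ * I) (Icc (0:ℝ) 1) ν :=
      fun ν _ => continuousOn_const.integrableOn_compact isCompact_Icc
    have e1 := hM _ hsub
    rw [integral_sub (i1 μ) (i2 μ), integral_sub (i1 volume) (i2 volume), setIntegral_const, setIntegral_const,
      smul_eq_mul, smul_eq_mul] at e1
    have e2 := Lop_upper S hc hC h0 h1 hN3 hN5 hn hψ
    rw [← hI] at e2
    have e3 := hconf ψ hψ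
    have e4 : (volume : Measure ℝ).real (Icc (0:ℝ) 1) = 1 := by simp
    rw [e4] at e1
    have e5 : μ.real (Icc 0 1) * (θ * I) ≤ θ * I := by
      have : 0 < θ * I := by positivity
      nlinarith
    have e6 : ∫ x in Icc (0:ℝ) 1, Lop S n h ψ x ≤ (1 + η) * I := e2.trans (by gcongr)
    have e7 : M * ((∫ x in Icc (0:ℝ) 1, Lop S n h ψ x) - 1 * (θ * I)) ≤ M * ((1 + η) * I - 1 * (θ * I)) := by
      gcongr
    calc ∫ x in Icc (0:ℝ) 1, ψ x ∂μ ≤ θ * I + M * ((1 + η) * I - 1 * (θ * I)) := by linarith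
      _ = _ := by ring
  set M := sInf A with hM
  have hMle : M ≤ θ / (θ - η) := by
    have h3 : 0 < 1 + η - θ := by linarith
    have : (M - θ) / (1 + η - θ) ≤ M := by
      refine le_csInf hAne ?_
      intro x hx
      rw [div_le_iff₀ h3]
      have := csInf_le hAb (hstep x hx)
      linarith
    rw [div_le_iff₀ h3] at this
    rw [le_div_iff₀ (by linarith)]
    linarith
  intro ψ hψ
  have hIpos := cls_int_pos hC hψ
  have : (∫ x in Icc (0:ℝ) 1, ψ x ∂μ) / (∫ x in Icc (0:ℝ) 1, ψ x) ≤ M := by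
    refine le_csInf hAne ?_
    intro x hx
    rw [div_le_iff₀ hIpos]
    exact hx.2 ψ hψ
  rw [div_le_iff₀ hIpos] at this
  refine this.trans ?_
  gcongr

lemma meas_setup (S : NonlinearIFS) {α c h : ℝ} (hc : 0 ≤ c) (hα0 : 0 ≤ α) (h0 : 0 < h) (h1 : h ≤ 1)
    (hN3 : ∀ n, 1 ≤ n → ∀ x ∈ Set.Icc (0 : ℝ) 1, |S.g'' n x / S.g' n x| < c)
    (hN5 : ∀ n, 1 ≤ n → ∀ x ∈ Set.Icc (0 : ℝ) 1, |S.g' n x| < α)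
    (n : ℕ) (hz : μH[h] (limitSet S.g n) ≠ 0) (ht : μH[h] (limitSet S.g n) ≠ ⊤) :
    ∃ μ : Measure ℝ, IsFiniteMeasure μ ∧ μ.real (Icc 0 1) ≤ 1 ∧
      (∀ (s : Finset ℕ) (B : Set ℝ), B ⊆ (⋃ k ∈ s, S.g k '' limitSet S.g n) → (∀ k ∈ s, 1 ≤ k) →
        ∀ C ψ, 0 ≤ C → Cls C ψ → (μH[h] (limitSet S.g n))⁻¹ * ∫⁻ x in B, ENNReal.ofReal (ψ x) ∂μH[h] ≤
          ENNReal.ofReal (∑ k ∈ s, ∫ x in Icc (0:ℝ) 1, ψ (S.g k x) * |S.g' k x| ^ h ∂μ)) ∧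
      (∀ C ψ, Cls C ψ → (μH[h] (limitSet S.g n))⁻¹ * ∫⁻ x in limitSet S.g n, ENNReal.ofReal (ψ x) ∂μH[h] =
          ENNReal.ofReal (∫ x in Icc (0:ℝ) 1, ψ x ∂μ)) := by
  set J := limitSet S.g n with hJ
  set T := (μH[h] : Measure ℝ) J with hT
  set μ : Measure ℝ := T⁻¹ • (μH[h] : Measure ℝ).restrict J with hμ
  have huniv : μ univ = 1 := by
    rw [hμ, Measure.smul_apply, Measure.restrict_apply_univ, smul_eq_mul]
    exact ENNReal.inv_mul_cancel hz ht
  have : IsProbabilityMeasure μ := ⟨huniv⟩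
  have hres : μ.restrict (Icc 0 1) = μ := by
    rw [hμ, Measure.restrict_smul, Measure.restrict_restrict measurableSet_Icc,
      inter_eq_self_of_subset_right (lim_sub_I S n)]
  have hB : ∀ C ψ, Cls C ψ → T⁻¹ * ∫⁻ x in J, ENNReal.ofReal (ψ x) ∂μH[h] =
          ENNReal.ofReal (∫ x in Icc (0:ℝ) 1, ψ x ∂μ) := by
    intro C ψ hψ
    rw [ofReal_integral_eq_lintegral_ofReal (hψ.1.integrableOn_compact isCompact_Icc)
      ((ae_restrict_iff' measurableSet_Icc).2 (Eventually.of_forall fun x hx => (hψ.2.1 x hx).le)),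
      hres, hμ, lintegral_smul_measure, smul_eq_mul]
  refine ⟨μ, inferInstance, measureReal_le_one, ?_, hB⟩
  intro s B hBs hs C ψ hC hψ
  have hterm : ∀ k ∈ s, Cls (c + α * C) (fun x => ψ (S.g k x) * |S.g' k x| ^ h) :=
    fun k hk => cls_term S hc hC h0 h1 hN3 hN5 hψ (hs k hk)
  rw [ENNReal.ofReal_sum_of_nonneg]
  · rw [← Finset.sum_congr rfl fun k hk => hB _ _ (hterm k hk), ← Finset.mul_sum]
    gcongr
    calc ∫⁻ x in B, ENNReal.ofReal (ψ x) ∂μH[h]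
        ≤ ∫⁻ x in ⋃ k : s, S.g k '' J, ENNReal.ofReal (ψ x) ∂μH[h] := by
          refine lintegral_mono_set (hBs.trans ?_)
          rw [iUnion_subtype]
      _ ≤ ∑' k : s, ∫⁻ x in S.g k '' J, ENNReal.ofReal (ψ x) ∂μH[h] := lintegral_iUnion_le _ _
      _ = ∑ k ∈ s, ∫⁻ x in S.g k '' J, ENNReal.ofReal (ψ x) ∂μH[h] := by
          rw [tsum_fintype, Finset.sum_coe_sort s (fun k => ∫⁻ x in S.g k '' J, ENNReal.ofReal (ψ x) ∂μH[h])]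
      _ ≤ _ := by
          refine Finset.sum_le_sum fun k hk => ?_
          have hk1 := hs k hk
          refine hcv (S.g k) (S.g' k) ψ h c (α * C) hc (by positivity) h0 h1 J (lim_meas S n) (lim_sub_I S n)
            (S.deriv1 k hk1) (g'_loglip S hN3 hk1) (fun x hx => hψ.2.1 _ (g_mem_I S hk1 hx)) ?_
          intro x hx y hy
          refine (hψ.2.2 _ (g_mem_I S hk1 hx) _ (g_mem_I S hk1 hy)).trans ?_
          have := hψ.2.1 _ (g_mem_I S hk1 hy)
          gcongr ?_ * _
          apply Real.exp_le_exp.2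
          have := mul_le_mul_of_nonneg_left (g_lip S hN5 hk1 x hx y hy) hC
          linarith
  · intro k hk
    exact setIntegral_nonneg measurableSet_Icc fun x hx => ((hterm k hk).2.1 x hx).le

lemma bump {δ r : ℝ} (hδ : 0 < δ) (hδ1 : δ ≤ 1) (hr : 0 < r) :
    ∃ ψ : ℝ → ℝ, Cls (1 / δ ^ 2) ψ ∧ (∀ x, x ≤ r → 1 ≤ ψ x) ∧
      ∫ x in Icc (0:ℝ) 1, ψ x ≤ r + 2 * δ := by
  set ψ : ℝ → ℝ := fun x => max δ (min 1 (1 + (r - x) / δ)) with hψ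
  have hcont : Continuous ψ := by fun_prop
  have hge : ∀ x, δ ≤ ψ x := fun x => le_max_left _ _
  refine ⟨ψ, ⟨hcont.continuousOn, fun x _ => hδ.trans_le (hge x), ?_⟩, ?_, ?_⟩
  · intro x _ y _
    have e1 : ψ x ≤ ψ y + |x - y| / δ := by
      have h0 : 0 ≤ |x - y| / δ := by positivity
      refine max_le (by linarith [hge y]) ?_
      have h2 : min 1 (1 + (r - y) / δ) ≤ ψ y := le_max_right _ _
      rcases min_cases 1 (1 + (r - y) / δ) with ⟨h, _⟩ | ⟨h, _⟩
      · exact (min_le_left _ _).trans (by linarith)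
      · refine (min_le_right _ _).trans ?_
        have : (r - x) / δ ≤ (r - y) / δ + |x - y| / δ := by
          rw [← add_div]
          gcongr
          linarith [neg_abs_le (x - y)]
        linarith
    have e2 : |x - y| / δ ≤ 1 / δ ^ 2 * |x - y| * ψ y := by
      have : |x - y| / δ = 1 / δ ^ 2 * |x - y| * δ := by field_simp
      rw [this]
      gcongr
      exact hge y
    have e3 := Real.add_one_le_exp (1 / δ ^ 2 * |x - y|)
    have := hδ.trans_le (hge y)
    nlinarith
  · intro x hx
    refine le_max_of_le_right (le_min le_rfl ?_)
    have : 0 ≤ (r - x) / δ := div_nonneg (by linarith) hδ.le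
    linarith
  · have hle : ∀ x, ψ x ≤ (Iic (r + δ)).indicator (fun _ => (1:ℝ)) x + δ := by
      intro x
      by_cases hx : x ≤ r + δ
      · rw [indicator_of_mem (show x ∈ Iic (r + δ) from hx)]
        exact max_le (by linarith) ((min_le_left _ _).trans (by linarith))
      · rw [indicator_of_notMem (show x ∉ Iic (r + δ) from hx), zero_add]
        refine max_le le_rfl ((min_le_right _ _).trans ?_)
        have : (r - x) / δ ≤ -1 := by
          rw [div_le_iff₀ hδ]; linarith
        linarith
    have i1 : IntegrableOn ((Iic (r + δ)).indicator (fun _ => (1:ℝ))) (Icc (0:ℝ) 1) :=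
      IntegrableOn.indicator (continuousOn_const.integrableOn_compact isCompact_Icc) measurableSet_Iic
    have i2 : IntegrableOn (fun _ => δ) (Icc (0:ℝ) 1) := continuousOn_const.integrableOn_compact isCompact_Icc
    have := setIntegral_mono_on (μ := volume) (s := Icc (0:ℝ) 1)
      (hcont.continuousOn.integrableOn_compact isCompact_Icc) (i1.add i2) measurableSet_Icc
      (fun x _ => hle x)
    refine this.trans ?_
    simp only [Pi.add_apply]
    rw [integral_add i1 i2, setIntegral_indicator measurableSet_Iic, setIntegral_const, setIntegral_const]
    have e : (volume : Measure ℝ).real (Icc 0 1 ∩ Iic (r + δ)) ≤ r + δ := by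
      have : Icc (0:ℝ) 1 ∩ Iic (r + δ) ⊆ Icc 0 (r + δ) := fun x hx => ⟨hx.1.1, hx.2⟩
      refine (measureReal_mono this (by simp)).trans ?_
      rw [Real.volume_real_Icc_of_le (by linarith)]
      linarith
    have e4 : (volume : Measure ℝ).real (Icc (0:ℝ) 1) = 1 := by simp
    rw [e4, smul_eq_mul, smul_eq_mul]
    linarith

lemma N2_bound (S : NonlinearIFS) {e : ℝ} (he : 0 < e) :
    ∃ k0, ∀ k ≥ k0, S.b k ≤ (1 + e) * S.b (k + 1) := by
  have h1 := S.N2.eventually_lt_const (show (1:ℝ) < 1 + e by linarith)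
  have h2 := S.N2.eventually_const_lt (show (1/2:ℝ) < 1 by norm_num)
  obtain ⟨k0, hk1, hk2⟩ := (h1.and h2).exists
  refine ⟨k0, fun k hk => ?_⟩
  have hb : BddAbove (range fun k => ⨆ (_ : k ∈ Set.Ici k0), S.b k / S.b (k + 1)) := by
    by_contra hcon
    rw [Real.iSup_of_not_bddAbove hcon] at hk2
    norm_num at hk2
  have h3 := le_ciSup hb k
  rw [ciSup_pos (show k ∈ Set.Ici k0 from hk)] at h3
  have := h3.trans hk1.le
  rwa [div_le_iff₀ (b_pos S _)] at this

lemma h_le_one (S : NonlinearIFS) {n : ℕ} (hn : 1 ≤ n) : S.h n ≤ 1 := by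
  have h1 := S.h_dim n hn
  have h2 : dimH (limitSet S.g n) ≤ 1 := by
    rw [← Real.dimH_univ]; exact dimH_mono (subset_univ _)
  rw [h1] at h2
  exact ENNReal.ofReal_le_one.1 h2

lemma h_tendsto (S : NonlinearIFS) : Tendsto S.h atTop (𝓝 1) := by
  have hlog : Tendsto (fun n : ℕ => (Real.log n)⁻¹) atTop (𝓝 0) :=
    (Real.tendsto_log_atTop.comp tendsto_natCast_atTop_atTop).inv_tendsto_atTop
  have h1 := (S.N1.mul hlog).const_sub 1
  simp only [mul_zero, sub_zero] at h1
  refine h1.congr' ?_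
  filter_upwards [eventually_ge_atTop 2] with n hn
  have : 0 < Real.log n := Real.log_pos (by exact_mod_cast hn)
  field_simp
  ring

lemma pow_tendsto (S : NonlinearIFS) : Tendsto (fun n : ℕ => (n:ℝ) ^ (1 - S.h n)) atTop (𝓝 1) := by
  have := (Real.continuous_exp.tendsto 0).comp S.N1
  rw [Real.exp_zero] at this
  refine this.congr' ?_
  filter_upwards [eventually_ge_atTop 1] with n hn
  rw [Real.rpow_def_of_pos (by exact_mod_cast hn), mul_comm]
  rfl

/-- In the nonlinear setting, for every `ε > 0` there is `n₀` such that
    `m_n([0,r])/r^{h_n} ≤ 1 + ε` for all `n > n₀` and all `r ∈ (0, 1]`. -/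
theorem nonlinear_density_zero_all_r (S : NonlinearIFS) :
    ∀ ε > (0 : ℝ), ∃ n₀ : ℕ, ∀ n > n₀, ∀ r : ℝ, 0 < r → r ≤ 1 →
      normMeas S n (Set.Icc 0 r) / ENNReal.ofReal (r ^ S.h n) ≤ ENNReal.ofReal (1 + ε) := by
  intro ε hε
  obtain ⟨c, hc0, hN3⟩ := S.N3
  obtain ⟨α, hα, hN5⟩ := S.N5
  have hα0 : 0 ≤ α := ((abs_nonneg _).trans_lt (hN5 1 le_rfl 0 (by simp))).le
  obtain ⟨e, he0, he⟩ : ∃ e : ℝ, 0 < e ∧ (1 + e) ^ 3 ≤ 1 + ε := by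
    refine ⟨min 1 (ε / 7), by positivity, ?_⟩
    have h1 : min 1 (ε / 7) ≤ 1 := min_le_left _ _
    have h2 : min 1 (ε / 7) ≤ ε / 7 := min_le_right _ _
    have h3 : 0 < min 1 (ε / 7) := by positivity
    set e := min 1 (ε / 7)
    have h4 : e ^ 2 ≤ e := by nlinarith
    have h5 : e ^ 3 ≤ e := by nlinarith
    nlinarith
  obtain ⟨k0, hk0⟩ := N2_bound S he0
  have hbk := b_pos S k0
  obtain ⟨δ, hδ0, hδ1, hδ⟩ : ∃ δ : ℝ, 0 < δ ∧ δ ≤ 1 ∧ 2 * δ ≤ e * S.b k0 := by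
    refine ⟨min 1 (e * S.b k0 / 2), by positivity, min_le_left _ _, ?_⟩
    have := min_le_right 1 (e * S.b k0 / 2)
    linarith
  set s := (1 - α) / 2 with hs
  have hs0 : 0 < s := by rw [hs]; linarith
  have hs1 : s < 1 := by rw [hs]; linarith
  set C := max (1 / δ ^ 2) (max c (c / s)) with hCdef
  have hC1 : 1 / δ ^ 2 ≤ C := le_max_left _ _
  have hC2 : c ≤ C := (le_max_left _ _).trans (le_max_right _ _)
  have hC3 : c / s ≤ C := (le_max_right _ _).trans (le_max_right _ _)
  have hC0 : 0 ≤ C := hc0.le.trans hC2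
  have hCs : c + α * C ≤ (1 - s) * C := by
    rw [div_le_iff₀ hs0] at hC3
    have : α = 1 - 2 * s := by rw [hs]; ring
    rw [this]; linarith
  obtain ⟨q, hq, hq'⟩ : ∃ q : ℝ, 0 < q ∧ ∀ x ∈ Icc (0:ℝ) 1, q ≤ |S.g' 1 x| := by
    obtain ⟨x0, hx0, hmin⟩ := isCompact_Icc.exists_isMinOn (nonempty_Icc.2 zero_le_one)
      (g'_cont S le_rfl).abs
    exact ⟨_, abs_pos.2 (S.deriv_ne 1 le_rfl x0 hx0), fun x hx => hmin hx⟩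
  have hθ0 : 0 < s * Real.exp (-C) * q := by positivity
  set θ := s * Real.exp (-C) * q with hθ
  set η := θ * e / (1 + e) with hη
  have hη0 : 0 < η := by positivity
  have hηθ : η < θ := by
    rw [hη, div_lt_iff₀ (by positivity)]; nlinarith
  have hratio : θ / (θ - η) = 1 + e := by
    rw [div_eq_iff (by linarith), hη]; field_simp; ring
  have hlim : Tendsto (fun n : ℕ => (n:ℝ) ^ (1 - S.h n) * (1 + (1 - S.h n) * Real.exp C)) atTop (𝓝 1) := by
    have := (pow_tendsto S).mul ((((h_tendsto S).const_sub 1).mul_const (Real.exp C)).const_add 1)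
    simpa using this
  have ev := ((hlim.eventually_lt_const (show (1:ℝ) < 1 + η by linarith)).and
    (((pow_tendsto S).eventually_lt_const (show (1:ℝ) < 1 + e by linarith)).and
    ((h_tendsto S).eventually_const_lt (show (0:ℝ) < 1 by norm_num))))
  obtain ⟨n₀, hn₀⟩ := eventually_atTop.1 ev
  refine ⟨n₀ + 1, fun n hn r hr0 hr1 => ?_⟩
  obtain ⟨hE1, hE2, hh0⟩ := hn₀ n (by omega)
  have hn1 : 1 ≤ n := by omega
  have hh1 := h_le_one S hn1
  set h := S.h n with hh
  have hrh : 0 < r ^ h := by positivity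
  refine ENNReal.div_le_of_le_mul ?_
  rw [← ENNReal.ofReal_mul (by linarith)]
  unfold normMeas
  rw [← hh]
  by_cases hz : μH[h] (limitSet S.g n) = 0
  · have : μH[h] (Icc 0 r ∩ limitSet S.g n) = 0 := measure_mono_null inter_subset_right hz
    rw [this]; simp
  by_cases ht : μH[h] (limitSet S.g n) = ⊤
  · rw [ht]; simp
  obtain ⟨μ, hfin, hμ1, hcov, heq⟩ := meas_setup S hc0.le hα0 hh0 hh1 hN3 hN5 n hz ht
  have hcore := core S hc0.le hC0 hh0 hh1 hα hN3 hN5 hq hq' hs0 hs1 hCs hn1 μ hμ1 (by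
    intro ψ hψ
    have hL : Cls (c + α * C) (Lop S n h ψ) :=
      cls_sum hn1 (F := fun k x => ψ (S.g k x) * |S.g' k x| ^ h)
        fun k hk => cls_term S hc0.le hC0 hh0 hh1 hN3 hN5 hψ (Finset.mem_Icc.1 hk).1
    have h1 := hcov (Finset.Icc 1 n) (limitSet S.g n)
      (by have := lim_sub S n; simpa using this) (fun k hk => (Finset.mem_Icc.1 hk).1) C ψ hC0 hψ
    rw [heq C ψ hψ] at h1
    have h2 : ∫ x in Icc (0:ℝ) 1, Lop S n h ψ x ∂μ =
        ∑ k ∈ Finset.Icc 1 n, ∫ x in Icc (0:ℝ) 1, ψ (S.g k x) * |S.g' k x| ^ h ∂μ := by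
      unfold Lop
      refine integral_finsetSum _ fun k hk => ?_
      exact (cls_term S hc0.le hC0 hh0 hh1 hN3 hN5 hψ (Finset.mem_Icc.1 hk).1).1.integrableOn_compact isCompact_Icc
    rw [h2]
    refine (ENNReal.ofReal_le_ofReal_iff ?_).1 h1
    rw [← h2]
    exact setIntegral_nonneg measurableSet_Icc fun x hx => (hL.2.1 x hx).le) hη0.le hηθ hE1.le
  rw [← hθ, hratio] at hcore
  rw [ENNReal.div_eq_inv_mul]
  have hconst : μH[h] (Icc 0 r ∩ limitSet S.g n) =
      ∫⁻ x in Icc 0 r ∩ limitSet S.g n, ENNReal.ofReal ((fun _ => (1:ℝ)) x) ∂μH[h] := by simp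
  rw [hconst]
  by_cases hrb : S.b k0 ≤ r
  · obtain ⟨ψ, hψ, hψ1, hψint⟩ := bump hδ0 hδ1 hr0
    have hψC := cls_mono hC1 hψ
    calc (μH[h] (limitSet S.g n))⁻¹ * ∫⁻ x in Icc 0 r ∩ limitSet S.g n, ENNReal.ofReal ((fun _ => (1:ℝ)) x) ∂μH[h]
        ≤ (μH[h] (limitSet S.g n))⁻¹ * ∫⁻ x in limitSet S.g n, ENNReal.ofReal (ψ x) ∂μH[h] := by
          gcongr _ * ?_
          refine (setLIntegral_mono' (measurableSet_Icc.inter (lim_meas S n)) fun x hx =>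
            ENNReal.ofReal_le_ofReal (hψ1 x hx.1.2)).trans ?_
          exact lintegral_mono_set inter_subset_right
      _ = ENNReal.ofReal (∫ x in Icc (0:ℝ) 1, ψ x ∂μ) := heq C ψ hψC
      _ ≤ _ := by
          apply ENNReal.ofReal_le_ofReal
          have e1 := hcore ψ hψC
          have e2 : r ≤ r ^ h := by
            simpa using Real.rpow_le_rpow_of_exponent_ge hr0 hr1 hh1
          have e3 : r + 2 * δ ≤ (1 + e) * r := by nlinarith
          calc ∫ x in Icc (0:ℝ) 1, ψ x ∂μ ≤ (1 + e) * ((1 + e) * r) := by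
                refine e1.trans ?_
                gcongr
                linarith
            _ ≤ (1 + e) ^ 3 * r := by nlinarith [mul_pos (mul_pos (mul_pos he0 hr0) (show 0 < 1 + e by linarith)) (show 0 < 1 + e by linarith)]
            _ ≤ _ := by gcongr
  · push Not at hrb
    obtain ⟨j, hjk, hj1, hj2⟩ : ∃ j, k0 ≤ j ∧ S.b (j + 1) ≤ r ∧ r < S.b j := by
      have hex : ∃ j, S.b (j + 1) ≤ r := by
        obtain ⟨j, hj⟩ := (S.b_lim.eventually_lt_const hr0).exists
        exact ⟨j, (S.b_anti (Nat.lt_succ_self j)).le.trans hj.le⟩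
      classical
      have h1 := Nat.find_spec hex
      have h2 : k0 ≤ Nat.find hex := by
        by_contra hcon
        push Not at hcon
        have := S.b_anti.antitone (show Nat.find hex + 1 ≤ k0 from hcon)
        linarith
      refine ⟨Nat.find hex, h2, h1, ?_⟩
      rcases Nat.eq_zero_or_pos (Nat.find hex) with h0 | h0
      · rw [h0] at h2 ⊢
        have : k0 = 0 := by omega
        rwa [this] at hrb
      · have := Nat.find_min hex (m := Nat.find hex - 1) (by omega)
        rw [Nat.sub_add_cancel h0] at this
        exact not_le.1 this
    have hone : Cls 0 (fun _ => (1:ℝ)) := ⟨continuousOn_const, fun _ _ => one_pos, by simp⟩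
    have hc1 := hcov (Finset.Ioc j n) (Icc 0 r ∩ limitSet S.g n) (by
      rintro x ⟨hx, hxJ⟩
      have := lim_sub S n hxJ
      simp only [mem_iUnion] at this ⊢
      obtain ⟨k, hk, y, hy, rfl⟩ := this
      refine ⟨k, ?_, y, hy, rfl⟩
      rw [Finset.mem_Ioc]
      refine ⟨?_, hk.2⟩
      by_contra hcon
      push Not at hcon
      have e1 := (g_mem S hk.1 (lim_sub_I S n hy)).1
      have e2 := S.b_anti.antitone hcon
      have e3 := hx.2
      linarith) (fun k hk => by have := Finset.mem_Ioc.1 hk; omega) 0 _ le_rfl hone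
    refine hc1.trans (ENNReal.ofReal_le_ofReal ?_)
    simp only [one_mul]
    have hsum : ∑ k ∈ Finset.Ioc j n, ∫ x in Icc (0:ℝ) 1, |S.g' k x| ^ h ∂μ ≤
        (1 + e) * ∑ k ∈ Finset.Ioc j n, ∫ x in Icc (0:ℝ) 1, |S.g' k x| ^ h := by
      rw [Finset.mul_sum]
      refine Finset.sum_le_sum fun k hk => ?_
      have hcl := cls_term S hc0.le le_rfl hh0 hh1 hN3 hN5 hone
        (show 1 ≤ k by have := Finset.mem_Ioc.1 hk; omega)
      simp only [one_mul, mul_zero, add_zero] at hcl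
      exact hcore _ (cls_mono hC2 hcl)
    have hbj := b_pos S j
    by_cases hjn : j ≤ n
    · have e1 := sum_pow S hh0 hh1 hjn hn1
      have e2 : (S.b j) ^ h ≤ (1 + e) * r ^ h := by
        have : S.b j ≤ (1 + e) * r := (hk0 j hjk).trans (by gcongr)
        refine (Real.rpow_le_rpow hbj.le this hh0.le).trans ?_
        rw [Real.mul_rpow (by linarith) hr0.le]
        gcongr
        have := Real.rpow_le_rpow_of_exponent_le (show 1 ≤ 1 + e by linarith) hh1
        simpa using this
      calc _ ≤ _ := hsum
        _ ≤ (1 + e) * ((1 + e) * ((1 + e) * r ^ h)) := by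
          refine mul_le_mul_of_nonneg_left (e1.trans ?_) (by linarith)
          exact mul_le_mul hE2.le e2 (by positivity) (by linarith)
        _ = (1 + e) ^ 3 * r ^ h := by ring
        _ ≤ _ := by gcongr
    · rw [Finset.Ioc_eq_empty (by omega)]
      simp
      positivity
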